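/- arXiv:math/0302017 — 2 statements merged into one kernel-verified Lean document; each statement's English description precedes it below -/
import Mathlib

section
/- Let p be a prime and let R and S be commutative Noetherian local pro-p domains, both of characteristic p, such that the Krull dimension of R is at least 2 and the Krull dimension of S is strictly greater than 1. Then for every natural number n and every subgroup G of GL_n(R) there exist a natural number m and an injective group homomorphism from G into GL_m(S). -/
/-!
Let `A = k⟦x₁, …, x_d⟧`, over which `R` is finite by Noether normalization, and let
`B = k⟦y⟧⟦t⟧`. Although `B` has dimension two, it contains a copy of `A`: choose `f₁, …, f_d`
in `k⟦y⟧` algebraically independent over `k` and send `xᵢ` to `fᵢ t`; the coefficient of `tⁿ`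
in the image of a power series is the value at `f` of its homogeneous part of degree `n`.

The module `Hom_A(R, B)` is free of finite rank over `B`, because its reduction modulo `t` is
torsion-free over the principal ideal domain `B / t = k⟦y⟧`, and `R` acts on it faithfully.
Thus `R` embeds in a matrix ring over `B`. By Noether normalization of `S`, whose dimension is
at least two, `B` embeds in `S`.
-/

open IsLocalRing
open scoped Pointwise

/-! ### Complete modules -/

theorem isPrecomplete_pi {A ι : Type*} [CommRing A] [Finite ι] (I : Ideal A) (M : ι → Type*)
    [∀ i, AddCommGroup (M i)] [∀ i, Module A (M i)] [∀ i, IsPrecomplete I (M i)] :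
    IsPrecomplete I (∀ i, M i) := by
  classical
  have := Fintype.ofFinite ι
  rw [← AdicCompletion.of_surjective_iff]
  intro x
  choose y hy using fun i => AdicCompletion.of_surjective I (M i) (AdicCompletion.pi I M x i)
  refine ⟨y, (AdicCompletion.piEquivOfFintype I M).injective ?_⟩
  ext1 i
  rw [AdicCompletion.piEquivOfFintype_apply, AdicCompletion.piEquivOfFintype_apply, ← hy i]
  exact AdicCompletion.map_of I _ y

theorem finite_of_finite_quotient_smul_top {A M : Type*} [CommRing A] [AddCommGroup M]
    [Module A M] (I : Ideal A) [IsPrecomplete I A] [IsHausdorff I M]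
    [Module.Finite A (M ⧸ (I • ⊤ : Submodule A M))] : Module.Finite A M := by
  obtain ⟨n, f, hf⟩ := Module.Finite.exists_fin' A (M ⧸ (I • ⊤ : Submodule A M))
  obtain ⟨g, rfl⟩ :=
    Module.projective_lifting_property _ f (Submodule.mkQ_surjective (I • ⊤))
  have := isPrecomplete_pi I fun _ : Fin n => A
  exact .of_surjective g (surjective_of_mkQ_comp_surjective hf)

/-! ### Krull dimension of power series rings -/

theorem ringKrullDim_le_of_isIntegral (A B : Type*) [CommRing A] [CommRing B] [Algebra A B]
    [Algebra.IsIntegral A B] : ringKrullDim B ≤ ringKrullDim A :=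
  Order.krullDim_le_of_strictMono (PrimeSpectrum.comap (algebraMap A B)) fun P Q h =>
    Ideal.IsIntegral.comap_lt_comap (I := P.asIdeal) (J := Q.asIdeal) h

theorem algebraMap_injective_of_ringKrullDim_le (A B : Type*) [CommRing A]
    [IsDomain A] [FiniteRingKrullDim A] [CommRing B] [Algebra A B] [Algebra.IsIntegral A B]
    (h : ringKrullDim A ≤ ringKrullDim B) : Function.Injective (algebraMap A B) := by
  rw [injective_iff_map_eq_zero]
  by_contra! ⟨a, hab, ha⟩
  let I := Ideal.span {a}
  have hI : ∀ b ∈ I, algebraMap A B b = 0 :=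
    (Ideal.span_singleton_le_iff_mem (RingHom.ker (algebraMap A B))).2 hab
  let := (Ideal.Quotient.lift I (algebraMap A B) hI).toAlgebra
  have : IsScalarTower A (A ⧸ I) B := .of_algebraMap_eq fun _ => rfl
  have : Algebra.IsIntegral (A ⧸ I) B := .tower_top A
  have hlt : ringKrullDim A + 1 ≤ ringKrullDim A :=
    (add_le_add_left (h.trans (ringKrullDim_le_of_isIntegral (A ⧸ I) B)) 1).trans
      (ringKrullDim_quotient_succ_le_of_nonZeroDivisor (mem_nonZeroDivisors_of_ne_zero ha))
  rw [ringKrullDim, Order.krullDim_eq_length_of_finiteDimensionalOrder] at hlt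
  exact (ENat.WithBot.add_one_le_iff.1 hlt).false

/-- Setting `X = 0`: the quotient of `R⟦X⟧` by the ideal generated by `X` is `R`. -/
noncomputable def powerSeriesQuotientSpanXEquiv (R : Type*) [CommRing R] :
    (PowerSeries R ⧸ Ideal.span {(PowerSeries.X : PowerSeries R)}) ≃+* R :=
  (Ideal.quotEquivOfEq (by
    ext f
    rw [Ideal.mem_span_singleton, PowerSeries.X_dvd_iff, RingHom.mem_ker])).trans
    (RingHom.quotientKerEquivOfSurjective (f := PowerSeries.constantCoeff)
      PowerSeries.constantCoeff_surj)

theorem X_mem_jacobson_powerSeries (R : Type*) [CommRing R] :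
    (PowerSeries.X : PowerSeries R) ∈ Ideal.jacobson ⊥ :=
  Ideal.mem_jacobson_bot.2 fun f => by
    rw [PowerSeries.isUnit_iff_constantCoeff]
    simp

theorem isNoetherianRing_powerSeries (R : Type*) [CommRing R] [IsNoetherianRing R] :
    IsNoetherianRing (PowerSeries R) :=
  inferInstanceAs (IsNoetherianRing (MvPowerSeries Unit R))

theorem ringKrullDim_powerSeries (R : Type*) [CommRing R] [IsNoetherianRing R] :
    ringKrullDim (PowerSeries R) = ringKrullDim R + 1 := by
  have := isNoetherianRing_powerSeries R
  have hX : (PowerSeries.X : PowerSeries R) ∈ Ring.jacobson (PowerSeries R) :=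
    Ideal.jacobson_bot (R := PowerSeries R) ▸ X_mem_jacobson_powerSeries R
  rw [← ringKrullDim_quotient_span_singleton_succ_eq_ringKrullDim_of_mem_jacobson
      (fun _ _ h => PowerSeries.X_mul_cancel h) hX,
    ringKrullDim_eq_of_ringEquiv (powerSeriesQuotientSpanXEquiv R)]

theorem ringKrullDim_mvPowerSeries_fin (R : Type*) [CommRing R] [IsNoetherianRing R] (n : ℕ) :
    ringKrullDim (MvPowerSeries (Fin n) R) = ringKrullDim R + n := by
  induction n with
  | zero =>
    simp [ringKrullDim_eq_of_ringEquiv (MvPowerSeries.isEmptyEquiv (Fin 0) R).toRingEquiv]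
  | succ n ih =>
    rw [ringKrullDim_eq_of_ringEquiv (MvPowerSeries.finSuccEquiv R n).toRingEquiv,
      ringKrullDim_powerSeries, ih, add_assoc, Nat.cast_succ]

/-! ### Noether normalization -/

theorem exists_mvPowerSeries_algHom {k R σ : Type*} [CommRing k] [CommRing R] [Algebra k R]
    [Finite σ] (I : Ideal R) [IsAdicComplete I R] (x : σ → R) (hx : ∀ i, x i ∈ I) :
    ∃ φ : MvPowerSeries σ k →ₐ[k] R, ∀ i, φ (MvPowerSeries.X i) = x i := by
  let : WithIdeal R := ⟨I⟩
  let : UniformSpace k := ⊥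
  have : DiscreteTopology k := ⟨rfl⟩
  obtain ⟨_, _⟩ := (show IsAdic I from rfl).isAdicComplete_iff.1 inferInstance
  have : ContinuousSMul k R :=
    continuousSMul_of_algebraMap k R continuous_of_discreteTopology
  have hx' : MvPowerSeries.HasEval x :=
    ⟨fun i => WithIdeal.isTopologicallyNilpotent_of_mem (hx i),
      by simp [Filter.cofinite_eq_bot]⟩
  exact ⟨MvPowerSeries.aeval hx', fun i => by simp [MvPowerSeries.coe_aeval]⟩

theorem finite_quotient_of_le_radical (k : Type*) {R : Type*} [CommRing k] [CommRing R]
    [IsNoetherianRing R] [Algebra k R] {I J : Ideal R} [Module.Finite k (R ⧸ I)] (hJI : J ≤ I)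
    (hIJ : I ≤ J.radical) : Module.Finite k (R ⧸ J) := by
  refine Module.finite_of_surjective_of_ker_le_nilradical (Ideal.Quotient.factorₐ k hJI)
    (Ideal.Quotient.factor_surjective hJI) ?_ (IsNoetherian.noetherian _)
  intro x hx
  obtain ⟨x, rfl⟩ := Ideal.Quotient.mk_surjective x
  obtain ⟨n, hn⟩ := hIJ (Ideal.Quotient.eq_zero_iff_mem.1 hx)
  exact ⟨n, by
    rwa [← map_pow, Submodule.zero_eq_bot, Ideal.mem_bot, Ideal.Quotient.eq_zero_iff_mem]⟩

theorem exists_systemOfParameters (R : Type*) [CommRing R] [IsLocalRing R] [IsNoetherianRing R] :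
    ∃ (d : ℕ) (x : Fin d → R), ringKrullDim R = d ∧
      (Ideal.span (Set.range x)).radical = maximalIdeal R := by
  obtain ⟨s, hs, hcard⟩ := (maximalIdeal R).exists_finset_card_eq_height_of_isNoetherianRing
  have hrange : Set.range (fun i => (s.equivFin.symm i : R)) = s := by
    simpa [Function.comp_def] using s.equivFin.symm.surjective.range_comp ((↑) : s → R)
  refine ⟨s.card, fun i => s.equivFin.symm i, ?_, ?_⟩
  · rw [← maximalIdeal_height_eq_ringKrullDim, ← hcard]
    rfl
  · rw [hrange]
    refine le_antisymm (hs.1.1.radical_le_iff.2 hs.1.2) ?_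
    rw [Ideal.radical_eq_sInf]
    exact le_sInf fun P hP => hs.2 ⟨hP.2, hP.1⟩ (le_maximalIdeal hP.2.ne_top)

theorem finite_of_finite_quotient_map {A B : Type*} [CommRing A] [CommRing B] [IsLocalRing B]
    [IsNoetherianRing B] [Algebra A B] (I : Ideal A) [IsPrecomplete I A]
    (hI : I.map (algebraMap A B) ≠ ⊤) [Module.Finite A (B ⧸ I.map (algebraMap A B))] :
    Module.Finite A B := by
  have : IsHausdorff I B :=
    (IsHausdorff.map_algebraMap_iff (S := B)).1 (.of_isLocalRing _ B hI)
  have : Module.Finite A (B ⧸ (I • ⊤ : Submodule A B)) := by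
    rw [Ideal.smul_top_eq_map]
    assumption
  exact finite_of_finite_quotient_smul_top I

theorem exists_finite_injective_mvPowerSeries (k R : Type*) [Field k] [CommRing R] [IsLocalRing R]
    [IsNoetherianRing R] [IsAdicComplete (maximalIdeal R) R] [Algebra k R]
    [Module.Finite k (ResidueField R)] :
    ∃ (d : ℕ) (φ : MvPowerSeries (Fin d) k →ₐ[k] R), ringKrullDim R = d ∧
      Function.Injective φ ∧ φ.Finite := by
  obtain ⟨d, x, hd, hx⟩ := exists_systemOfParameters R
  set J := Ideal.span (Set.range x)
  have hJ : J ≤ maximalIdeal R := hx ▸ Ideal.le_radical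
  obtain ⟨φ, hφ⟩ := exists_mvPowerSeries_algHom (k := k) (maximalIdeal R) x fun i =>
    hJ (Ideal.subset_span ⟨i, rfl⟩)
  let := φ.toAlgebra
  have : IsScalarTower k (MvPowerSeries (Fin d) k) R :=
    .of_algebraMap_eq fun c => (φ.commutes c).symm
  let I : Ideal (MvPowerSeries (Fin d) k) := Ideal.span (Set.range MvPowerSeries.X)
  have hIJ : I.map (algebraMap _ R) = J := by
    rw [Ideal.map_span, ← Set.range_comp]
    exact congrArg (fun y => Ideal.span (Set.range y)) (funext hφ)
  have : Module.Finite k (R ⧸ J) :=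
    have : Module.Finite k (R ⧸ maximalIdeal R) := ‹Module.Finite k (ResidueField R)›
    finite_quotient_of_le_radical k hJ hx.ge
  have : Module.Finite (MvPowerSeries (Fin d) k) (R ⧸ I.map (algebraMap _ R)) :=
    hIJ ▸ .of_restrictScalars_finite k _ _
  have hfin : Module.Finite (MvPowerSeries (Fin d) k) R :=
    finite_of_finite_quotient_map I (hIJ ▸ (hJ.trans_lt (maximalIdeal.isMaximal R).lt_top).ne)
  have : IsDomain (MvPowerSeries (Fin d) k) := NoZeroDivisors.to_isDomain _
  have hdim : ringKrullDim (MvPowerSeries (Fin d) k) = ringKrullDim R := by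
    rw [ringKrullDim_mvPowerSeries_fin, ringKrullDim_eq_zero_of_field, zero_add, hd]
  exact ⟨d, φ, hd, algebraMap_injective_of_ringKrullDim_le _ R hdim.le, hfin⟩

/-! ### Algebraically independent power series -/

theorem uncountable_powerSeries (R : Type*) [Semiring R] [Nontrivial R] :
    Uncountable (PowerSeries R) := by
  refine not_countable_iff.1 fun h => ?_
  obtain ⟨e, he⟩ := exists_surjective_nat (PowerSeries R)
  choose c hc using fun n => exists_ne (PowerSeries.coeff n (e n))
  obtain ⟨n, hn⟩ := he (PowerSeries.mk c)
  exact hc n (by rw [hn, PowerSeries.coeff_mk])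

theorem exists_nat_algebraicIndependent (k B : Type*) [CommRing k] [IsDomain k]
    [CommRing B] [IsDomain B] [Algebra k B] [FaithfulSMul k B] [Countable k] [Uncountable B] :
    ∃ f : ℕ → B, AlgebraicIndependent k f := by
  obtain ⟨ι, x, hx⟩ := exists_isTranscendenceBasis' k B
  have : Infinite ι := by
    refine not_finite_iff_infinite.1 fun _ => not_countable (α := B) ?_
    have : Countable (MvPolynomial ι k) :=
      Cardinal.mk_le_aleph0_iff.1 (MvPolynomial.cardinalMk_le_max_lift.trans (by simp))
    have : Countable (Algebra.adjoin k (Set.range x)) := hx.1.aevalEquiv.symm.injective.countable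
    have := hx.isAlgebraic
    rw [← Set.countable_univ_iff]
    exact (Algebraic.countable (Algebra.adjoin k (Set.range x)) B).mono fun b _ =>
      this.isAlgebraic b
  exact ⟨x ∘ Infinite.natEmbedding ι, hx.1.comp _ (Infinite.natEmbedding ι).injective⟩

theorem countable_subfield_bot (k : Type*) [Field k] : Countable (⊥ : Subfield k) := by
  rw [← Cardinal.mk_le_aleph0_iff, ← Subfield.closure_empty]
  simpa using Subfield.cardinalMk_closure_le_max (∅ : Set k)

section BaseChange

variable {F K : Type*} [Field F] [CommRing K] [Algebra F K]

theorem linearIndependent_map_powerSeries {ι : Type*} {g : ι → PowerSeries F}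
    (hg : LinearIndependent F g) :
    LinearIndependent K fun i => PowerSeries.map (algebraMap F K) (g i) := by
  rw [linearIndependent_iff'] at hg ⊢
  intro s c hc i hi
  refine (Module.forall_dual_apply_eq_zero_iff F _).1 fun ℓ => hg s (fun j => ℓ (c j)) ?_ i hi
  ext n
  have h := congrArg (fun f => ℓ (PowerSeries.coeff n f)) hc
  simpa [mul_comm (c _), ← Algebra.smul_def, mul_comm (ℓ _)] using h

theorem algebraicIndependent_map_powerSeries {ι : Type*} {f : ι → PowerSeries F}
    (hf : AlgebraicIndependent F f) :
    AlgebraicIndependent K fun i => PowerSeries.map (algebraMap F K) (f i) := by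
  let evalF := (MvPolynomial.aeval (R := F) f).toLinearMap
  let evalK :=
    (MvPolynomial.aeval (R := K) fun i => PowerSeries.map (algebraMap F K) (f i)).toLinearMap
  have hF : LinearIndependent F (evalF ∘ MvPolynomial.basisMonomials ι F) :=
    (MvPolynomial.basisMonomials ι F).linearIndependent.map' evalF (LinearMap.ker_eq_bot.2 hf)
  have hmonomials : evalK ∘ MvPolynomial.basisMonomials ι K = fun e =>
      PowerSeries.map (algebraMap F K) (evalF (MvPolynomial.basisMonomials ι F e)) := by
    ext1 e
    simp [evalF, evalK, MvPolynomial.aeval_monomial, Finsupp.prod]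
  refine LinearMap.injective_of_linearIndependent (f := evalK)
    (MvPolynomial.basisMonomials ι K).span_eq ?_
  rw [hmonomials]
  exact linearIndependent_map_powerSeries hF

end BaseChange

theorem exists_nat_algebraicIndependent_powerSeries (k : Type*) [Field k] :
    ∃ f : ℕ → PowerSeries k, AlgebraicIndependent k f := by
  have := countable_subfield_bot k
  have := uncountable_powerSeries (⊥ : Subfield k)
  obtain ⟨f, hf⟩ :=
    exists_nat_algebraicIndependent (⊥ : Subfield k) (PowerSeries (⊥ : Subfield k))
  exact ⟨_, algebraicIndependent_map_powerSeries hf⟩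

section Substitution

variable {k B σ : Type*} [CommRing k] [CommRing B] [Algebra k B]

theorem hasSubst_C_mul_X [Finite σ] (f : σ → B) :
    MvPowerSeries.HasSubst fun i => (PowerSeries.C (f i) * PowerSeries.X : PowerSeries B) :=
  MvPowerSeries.hasSubst_of_constantCoeff_zero fun i =>
    (map_mul PowerSeries.constantCoeff _ _).trans (by simp)

theorem prod_C_mul_X_pow (f : σ → B) (e : σ →₀ ℕ) :
    (e.prod fun i m => (PowerSeries.C (f i) * PowerSeries.X : PowerSeries B) ^ m) =
      PowerSeries.C (e.prod fun i m => f i ^ m) * PowerSeries.X ^ e.degree := by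
  simp only [mul_pow, Finsupp.prod_mul]
  simp [Finsupp.prod, Finset.prod_pow_eq_pow_sum, Finsupp.degree_apply]

theorem mem_finsuppAntidiag_univ_iff [Fintype σ] [DecidableEq σ] {e : σ →₀ ℕ} {n : ℕ} :
    e ∈ Finset.finsuppAntidiag Finset.univ n ↔ e.degree = n := by
  simp [Finset.mem_finsuppAntidiag, Finsupp.degree_eq_sum]

theorem coeff_subst_C_mul_X [Fintype σ] [DecidableEq σ] (f : σ → B) (F : MvPowerSeries σ k)
    (n : ℕ) :
    PowerSeries.coeff n (MvPowerSeries.subst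
        (fun i => (PowerSeries.C (f i) * PowerSeries.X : PowerSeries B)) F) =
      MvPolynomial.aeval f (F.truncFinset k (Finset.finsuppAntidiag Finset.univ n)) := by
  have hcoeff (e : σ →₀ ℕ) :
      PowerSeries.coeff n (e.prod fun i m => (PowerSeries.C (f i) * PowerSeries.X) ^ m) =
        if e ∈ Finset.finsuppAntidiag Finset.univ n then e.prod fun i m => f i ^ m else 0 := by
    rw [prod_C_mul_X_pow, PowerSeries.coeff_C_mul, PowerSeries.coeff_X_pow]
    simp only [mem_finsuppAntidiag_univ_iff, eq_comm, mul_ite, mul_one, mul_zero]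
  calc
    _ = ∑ᶠ e, MvPowerSeries.coeff e F • PowerSeries.coeff n
          (e.prod fun i m => (PowerSeries.C (f i) * PowerSeries.X) ^ m) :=
      MvPowerSeries.coeff_subst (hasSubst_C_mul_X f) F _
    _ = ∑ e ∈ Finset.finsuppAntidiag Finset.univ n,
          MvPowerSeries.coeff e F • e.prod fun i m => f i ^ m := by
      simp only [hcoeff]
      rw [finsum_eq_sum_of_support_subset (s := Finset.finsuppAntidiag Finset.univ n)]
      · exact Finset.sum_congr rfl fun e he => by rw [if_pos he]
      · refine Function.support_subset_iff'.2 fun e he => ?_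
        rw [if_neg (Finset.mem_coe.not.1 he), smul_zero]
    _ = _ := by
      simp only [MvPowerSeries.truncFinset_apply, map_sum, MvPolynomial.aeval_monomial,
        Algebra.smul_def]

theorem exists_injective_mvPowerSeries_powerSeries [Finite σ] {f : σ → B}
    (hf : AlgebraicIndependent k f) :
    ∃ φ : MvPowerSeries σ k →ₐ[k] PowerSeries B, Function.Injective φ := by
  classical
  have := Fintype.ofFinite σ
  refine ⟨MvPowerSeries.substAlgHom (hasSubst_C_mul_X f),
    (injective_iff_map_eq_zero _).2 fun F hF => MvPowerSeries.ext fun e => ?_⟩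
  rw [MvPowerSeries.coe_substAlgHom] at hF
  have htrunc : F.truncFinset k (Finset.finsuppAntidiag Finset.univ e.degree) = 0 :=
    (injective_iff_map_eq_zero _).1 hf _ (by rw [← coeff_subst_C_mul_X, hF, map_zero])
  rw [← MvPowerSeries.coeff_truncFinset_of_mem F (mem_finsuppAntidiag_univ_iff.2 rfl), htrunc,
    MvPolynomial.coeff_zero, map_zero]

end Substitution

theorem exists_injective_powerSeries_powerSeries (k σ : Type*) [CommRing k] [Nontrivial σ] :
    ∃ φ : PowerSeries (PowerSeries k) →ₐ[k] MvPowerSeries σ k, Function.Injective φ := by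
  classical
  obtain ⟨i, j, hij⟩ := exists_pair_ne σ
  let e : Option Unit ↪ σ := ⟨fun o => o.elim i fun _ => j, by
    rintro (_ | _) (_ | _) h <;> simp_all⟩
  exact ⟨(MvPowerSeries.rename e).comp (MvPowerSeries.optionEquivLeft Unit k).symm.toAlgHom,
    (MvPowerSeries.rename_injective e).comp (MvPowerSeries.optionEquivLeft Unit k).symm.injective⟩

/-! ### Linear maps into a ring -/

section LinearMaps

variable {A B M : Type*} [CommRing A] [CommRing B] [Algebra A B] [AddCommGroup M] [Module A M]

theorem isNoetherian_linearMap_algebra [IsNoetherianRing B] [Module.Finite A M] :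
    IsNoetherian B (M →ₗ[A] B) := by
  obtain ⟨n, g, hg⟩ := Module.Finite.exists_fin (R := A) (M := M)
  let evalGenerators : (M →ₗ[A] B) →ₗ[B] Fin n → B :=
    LinearMap.pi fun i => LinearMap.applyₗ' B (g i)
  exact isNoetherian_of_injective evalGenerators fun _ _ h =>
    LinearMap.ext_on_range hg (congrFun h)

theorem exists_eq_smul_of_forall_dvd {x : B} (hx : IsLeftRegular x) {f : M →ₗ[A] B}
    (hf : ∀ m, x ∣ f m) : ∃ g : M →ₗ[A] B, f = x • g := by
  choose g hg using hf
  refine ⟨⟨⟨g, fun m n => hx ?_⟩, fun a m => hx ?_⟩, LinearMap.ext hg⟩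
  · simp only [mul_add, ← hg, map_add]
  · simp only [mul_smul_comm, ← hg, map_smul, RingHom.id_apply]

theorem isTorsionFree_quotSMulTop_linearMap [IsDomain B] {x : B} (hx : Prime x) :
    Module.IsTorsionFree (B ⧸ Ideal.span {x}) (QuotSMulTop x (M →ₗ[A] B)) := by
  have : (Ideal.span {x}).IsPrime := (Ideal.span_singleton_prime hx.ne_zero).2 hx
  refine Module.isTorsionFree_iff_smul_eq_zero.2 fun c f hcf => or_iff_not_imp_left.2 fun hc => ?_
  obtain ⟨c, rfl⟩ := Ideal.Quotient.mk_surjective c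
  obtain ⟨f, rfl⟩ := Submodule.Quotient.mk_surjective _ f
  rw [Ideal.Quotient.eq_zero_iff_mem, Ideal.mem_span_singleton] at hc
  have hmem : c • f ∈ x • (⊤ : Submodule B (M →ₗ[A] B)) :=
    (Submodule.Quotient.mk_eq_zero _).1 hcf
  obtain ⟨g, -, hg⟩ := (Submodule.mem_smul_pointwise_iff_exists _ _ _).1 hmem
  have hdvd (m : M) : x ∣ f m :=
    (hx.dvd_or_dvd ⟨g m, (LinearMap.congr_fun hg m).symm⟩).resolve_left hc
  obtain ⟨h, rfl⟩ := exists_eq_smul_of_forall_dvd (mul_right_injective₀ hx.ne_zero) hdvd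
  exact (Submodule.Quotient.mk_eq_zero _).2 (Submodule.smul_mem_pointwise_smul _ _ _ trivial)

theorem free_linearMap_of_isPrincipalIdealRing_quotient [IsDomain B] [IsNoetherianRing B]
    [Module.Finite A M] {x : B} (hx : Prime x) (hjac : x ∈ Ideal.jacobson (⊥ : Ideal B))
    [IsPrincipalIdealRing (B ⧸ Ideal.span {x})] : Module.Free B (M →ₗ[A] B) := by
  have : (Ideal.span {x}).IsPrime := (Ideal.span_singleton_prime hx.ne_zero).2 hx
  have := isNoetherian_linearMap_algebra (A := A) (B := B) (M := M)
  have := isTorsionFree_quotSMulTop_linearMap (A := A) (M := M) hx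
  have := Module.finitePresentation_of_finite B (M →ₗ[A] B)
  have : Module.Finite (B ⧸ Ideal.span {x}) (QuotSMulTop x (M →ₗ[A] B)) :=
    .of_restrictScalars_finite B _ _
  have hreg : IsSMulRegular (M →ₗ[A] B) x := fun f g h => LinearMap.ext fun m =>
    mul_left_cancel₀ hx.ne_zero (LinearMap.congr_fun h m)
  exact (Module.free_quotSMulTop_iff_free _ _ hjac hreg).1 inferInstance

end LinearMaps

section TorsionFree

variable {A M : Type*} [CommRing A] [IsDomain A] [AddCommGroup M] [Module A M]

theorem injective_mkLinearMap_nonZeroDivisors [Module.IsTorsionFree A M] :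
    Function.Injective (LocalizedModule.mkLinearMap (nonZeroDivisors A) M) := by
  rw [injective_iff_map_eq_zero]
  intro x hx
  obtain ⟨c, hc⟩ := (IsLocalizedModule.eq_zero_iff (nonZeroDivisors A) _).1 hx
  exact (smul_eq_zero_iff_right (nonZeroDivisors.ne_zero c.2)).1 hc

theorem exists_dual_apply_ne_zero [Module.Finite A M] [Module.IsTorsionFree A M] {x : M}
    (hx : x ≠ 0) : ∃ f : Module.Dual A M, f x ≠ 0 := by
  let K := FractionRing A
  let ι := LocalizedModule.mkLinearMap (nonZeroDivisors A) M
  have hιx : ι x ≠ 0 := (map_ne_zero_iff ι injective_mkLinearMap_nonZeroDivisors).2 hx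
  obtain ⟨ℓ, hℓ⟩ := not_forall.1 ((Module.forall_dual_apply_eq_zero_iff K (ι x)).not.2 hιx)
  let g : M →ₗ[A] K := ℓ.restrictScalars A ∘ₗ ι
  obtain ⟨a, ha, hint⟩ := FractionalIdeal.isFractional_of_fg
    (S := nonZeroDivisors A) (Module.Finite.fg_top.map g)
  let e := LinearEquiv.ofInjective (Algebra.linearMap A K) (IsFractionRing.injective A K)
  let f : Module.Dual A M :=
    e.symm.toLinearMap ∘ₗ (a • g).codRestrict _ fun m => hint (g m) ⟨m, trivial, rfl⟩
  have hf : algebraMap A K (f x) = a • g x := congrArg Subtype.val (e.apply_symm_apply _)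
  refine ⟨f, fun h => smul_ne_zero (nonZeroDivisors.ne_zero ha) hℓ ?_⟩
  rw [← map_zero (algebraMap A K), ← h, hf]
  rfl

end TorsionFree

section Matrices

variable {A B R : Type*} [CommRing A] [CommRing B] [Algebra A B] [CommRing R] [Algebra A R]

/-- The `B`-linear action of `R` on `Hom_A(R, B)`, with `r` sending `h` to `x ↦ h (r * x)`. Its
matrices represent `R` over `B` when `Hom_A(R, B)` is free. -/
noncomputable def precompMulLeft (A B R : Type*) [CommRing A] [CommRing B] [Algebra A B]
    [CommRing R] [Algebra A R] : R →+* Module.End B (R →ₗ[A] B) where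
  toFun r := LinearMap.lcomp B B (LinearMap.mulLeft A r)
  map_one' := by ext; simp
  map_mul' r s := by ext; simp [mul_left_comm]
  map_zero' := by ext; simp
  map_add' r s := by ext; simp [add_mul]

theorem precompMulLeft_injective [IsDomain A] [FaithfulSMul A B] [Module.Finite A R]
    [Module.IsTorsionFree A R] : Function.Injective (precompMulLeft A B R) := by
  refine (injective_iff_map_eq_zero _).2 fun r hr => by_contra fun hr0 => ?_
  obtain ⟨f, hf⟩ := exists_dual_apply_ne_zero (A := A) hr0
  have hmul : algebraMap A B (f (r * 1)) = 0 :=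
    LinearMap.congr_fun (LinearMap.congr_fun hr (Algebra.linearMap A B ∘ₗ f)) 1
  rw [mul_one, FaithfulSMul.algebraMap_eq_zero_iff] at hmul
  exact hf hmul

theorem exists_injective_matrix_of_free_linearMap [IsDomain A] [IsNoetherianRing B]
    [FaithfulSMul A B] [Module.Finite A R] [Module.IsTorsionFree A R] [Module.Free B (R →ₗ[A] B)] :
    ∃ (m : ℕ) (ψ : R →+* Matrix (Fin m) (Fin m) B), Function.Injective ψ := by
  have := isNoetherian_linearMap_algebra (A := A) (B := B) (M := R)
  let b := Module.Free.chooseBasis B (R →ₗ[A] B)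
  let e := Fintype.equivFin (Module.Free.ChooseBasisIndex B (R →ₗ[A] B))
  let b' := b.reindex e
  exact ⟨_, (LinearMap.toMatrixAlgEquiv b').toRingEquiv.toRingHom.comp (precompMulLeft A B R),
    (LinearMap.toMatrixAlgEquiv b').injective.comp precompMulLeft_injective⟩

end Matrices

/-! ### Linear transfer -/

theorem free_linearMap_powerSeries (A M K : Type*) [CommRing A] [AddCommGroup M] [Module A M]
    [Module.Finite A M] [CommRing K] [IsDomain K] [IsPrincipalIdealRing K]
    [Algebra A (PowerSeries K)] : Module.Free (PowerSeries K) (M →ₗ[A] PowerSeries K) := by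
  have : IsNoetherianRing (PowerSeries K) := isNoetherianRing_powerSeries K
  have : IsPrincipalIdealRing (PowerSeries K ⧸ Ideal.span {(PowerSeries.X : PowerSeries K)}) :=
    .of_surjective (powerSeriesQuotientSpanXEquiv K).symm
      (powerSeriesQuotientSpanXEquiv K).symm.surjective
  exact free_linearMap_of_isPrincipalIdealRing_quotient PowerSeries.X_prime
    (X_mem_jacobson_powerSeries K)

theorem exists_injective_matrix_powerSeries (k R : Type*) [Field k]
    [CommRing R] [IsDomain R] [IsNoetherianRing R] [IsLocalRing R]
    [IsAdicComplete (maximalIdeal R) R] [Algebra k R] [Module.Finite k (ResidueField R)] :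
    ∃ (m : ℕ) (ψ : R →+* Matrix (Fin m) (Fin m) (PowerSeries (PowerSeries k))),
      Function.Injective ψ := by
  obtain ⟨d, φ, -, hφ, hfin⟩ := exists_finite_injective_mvPowerSeries k R
  obtain ⟨f, hf⟩ := exists_nat_algebraicIndependent_powerSeries k
  obtain ⟨θ, hθ⟩ := exists_injective_mvPowerSeries_powerSeries
    (hf.comp (Fin.val : Fin d → ℕ) Fin.val_injective)
  let A := MvPowerSeries (Fin d) k
  let B := PowerSeries (PowerSeries k)
  let : Algebra A R := φ.toRingHom.toAlgebra
  let : Algebra A B := θ.toRingHom.toAlgebra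
  have : IsDomain A := NoZeroDivisors.to_isDomain _
  have : Module.Finite A R := hfin
  have : FaithfulSMul A B := (faithfulSMul_iff_algebraMap_injective A B).2 hθ
  have : FaithfulSMul A R := (faithfulSMul_iff_algebraMap_injective A R).2 hφ
  have : IsNoetherianRing B := isNoetherianRing_powerSeries _
  have : Module.Free B (R →ₗ[A] B) := free_linearMap_powerSeries A R (PowerSeries k)
  exact exists_injective_matrix_of_free_linearMap (A := A)

theorem exists_injective_powerSeries_powerSeries_of_one_lt_ringKrullDim (k S : Type*) [Field k]
    [CommRing S] [IsNoetherianRing S] [IsLocalRing S]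
    [IsAdicComplete (maximalIdeal S) S] [Algebra k S] [Module.Finite k (ResidueField S)]
    (hS : 1 < ringKrullDim S) :
    ∃ η : PowerSeries (PowerSeries k) →ₐ[k] S, Function.Injective η := by
  obtain ⟨d, φ, hd, hφ, -⟩ := exists_finite_injective_mvPowerSeries k S
  rw [hd] at hS
  have : Nontrivial (Fin d) := Fin.nontrivial_iff_two_le.2 (by exact_mod_cast hS)
  obtain ⟨η, hη⟩ := exists_injective_powerSeries_powerSeries k (Fin d)
  exact ⟨φ.comp η, hφ.comp hη⟩

theorem exists_injective_generalLinearGroup {R S : Type*} [CommRing R] [CommRing S] {m : ℕ}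
    {ψ : R →+* Matrix (Fin m) (Fin m) S} (hψ : Function.Injective ψ) (n : ℕ) :
    ∃ f : Matrix.GeneralLinearGroup (Fin n) R →* Matrix.GeneralLinearGroup (Fin (n * m)) S,
      Function.Injective f := by
  let flatten := (Matrix.compRingEquiv (Fin n) (Fin m) S).trans
    (Matrix.reindexAlgEquiv ℤ S (finProdFinEquiv (m := n) (n := m))).toRingEquiv
  let F := flatten.toRingHom.comp ψ.mapMatrix
  have hF : Function.Injective F := flatten.injective.comp (Matrix.map_injective hψ)
  exact ⟨Units.map F, Units.map_injective hF⟩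

theorem linear_transfer_char_p_general (k R S : Type*) [Field k]
    [CommRing R] [IsDomain R] [IsNoetherianRing R] [IsLocalRing R]
    [IsAdicComplete (maximalIdeal R) R] [Algebra k R] [Module.Finite k (ResidueField R)]
    [CommRing S] [IsNoetherianRing S] [IsLocalRing S]
    [IsAdicComplete (maximalIdeal S) S] [Algebra k S] [Module.Finite k (ResidueField S)]
    (hS : 1 < ringKrullDim S) (n : ℕ) (G : Subgroup (Matrix.GeneralLinearGroup (Fin n) R)) :
    ∃ (m : ℕ) (f : G →* Matrix.GeneralLinearGroup (Fin m) S), Function.Injective f := by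
  obtain ⟨m, ψ, hψ⟩ := exists_injective_matrix_powerSeries k R
  obtain ⟨η, hη⟩ := exists_injective_powerSeries_powerSeries_of_one_lt_ringKrullDim k S hS
  have hψη : Function.Injective (η.toRingHom.mapMatrix.comp ψ) :=
    (Matrix.map_injective hη).comp hψ
  obtain ⟨F, hF⟩ := exists_injective_generalLinearGroup hψη n
  exact ⟨n * m, F.comp G.subtype, hF.comp G.subtype_injective⟩

/-- Let `R`, `S` be commutative Noetherian local pro-`p` domains of
characteristic `p` with `Krull dim R ≥ 2` and `Krull dim S > 1`. Then every subgroup of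
`GL_n(R)` embeds into `GL_m(S)` for some `m`. -/
theorem linear_transfer_char_p (p : ℕ) [Fact p.Prime]
    (R : Type) [CommRing R] [IsDomain R] [IsNoetherianRing R] [IsLocalRing R]
    [IsAdicComplete (IsLocalRing.maximalIdeal R) R]
    [Finite (IsLocalRing.ResidueField R)] [CharP (IsLocalRing.ResidueField R) p]
    [CharP R p]
    (S : Type) [CommRing S] [IsDomain S] [IsNoetherianRing S] [IsLocalRing S]
    [IsAdicComplete (IsLocalRing.maximalIdeal S) S]
    [Finite (IsLocalRing.ResidueField S)] [CharP (IsLocalRing.ResidueField S) p]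
    [CharP S p]
    (hR : 2 ≤ ringKrullDim R) (hS : 1 < ringKrullDim S)
    (n : ℕ) (G : Subgroup (Matrix.GeneralLinearGroup (Fin n) R)) :
    ∃ (m : ℕ) (f : G →* Matrix.GeneralLinearGroup (Fin m) S),
      Function.Injective f := by
  let := ZMod.algebra R p
  let := ZMod.algebra S p
  exact linear_transfer_char_p_general (ZMod p) R S hS n G
end

section
/- Let p be a prime and set 𝐩 = p if p is odd and 𝐩 = 4 if p = 2. Let D be a (possibly noncommutative) ring that is an algebra over the ring ℤ_p of p-adic integers, torsion-free as a ℤ_p-module, and Hausdorff and complete with respect to the p-adic filtration p^i D. Let φ be a ℤ_p-algebra automorphism of D such that φ(x) − x ∈ 𝐩D for every x ∈ D. Then there exists a map δ : D → D such that: (i) δ is additive and satisfies the Leibniz rule δ(x y) = δ(x) y + x δ(y) for all x, y ∈ D (δ is a derivation); (ii) δ(x) ∈ 𝐩D for every x; (iii) for every x ∈ D and every i ≥ 1 there exists c ∈ D with i · c = (−1)^{i+1} (φ − id)^{∘ i}(x), and for every x and every k there exists N such that for all n ≥ N and every finite sequence c₁, …, c_n ∈ D with i · c_i = (−1)^{i+1}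 (φ − id)^{∘ i}(x) for each 1 ≤ i ≤ n, one has δ(x) − (c₁ + ⋯ + c_n) ∈ p^k D. (In other words, log φ is well defined as a p-adic limit and is a derivation of D.) -/
/-- `𝐩 = p` for odd `p` and `𝐩 = 4` for `p = 2`. -/
def padicBound (p : ℕ) : ℕ := if p = 2 then 4 else p

/-!
Write `φ = 1 + pθ` in the `p`-adically complete algebra `End D`. Since `p ^ i / i ∈ ℤ_p` tends to
`0`, the series `log φ = ∑ (-1) ^ (i + 1) (p ^ i / i) θ ^ i` converges there. The identity
`C(N, i) / N = C(N - 1, i - 1) / i` turns the binomial expansion of `φ ^ N` into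
`(φ ^ N - 1) / N = ∑ C(N - 1, i - 1) (p ^ i / i) θ ^ i`, and `C(p ^ n - 1, i - 1) → (-1) ^ (i - 1)`,
so `(φ ^ (p ^ n) - 1) / p ^ n → log φ`. Each `φ ^ (p ^ n)` is multiplicative, hence the difference
quotient satisfies the Leibniz rule up to an error divisible by `p ^ n`.
-/

open Filter Finset

section AdicTendsto

variable {R M N : Type*} [CommRing R] [AddCommGroup M] [Module R M] [AddCommGroup N] [Module R N]
  {I : Ideal R} {f g : ℕ → M} {x y : M}

/-- Convergence of a sequence in the `I`-adic topology of a module, phrased through congruences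
so that no topology has to be put on the module. -/
def AdicTendsto (I : Ideal R) (f : ℕ → M) (x : M) : Prop :=
  ∀ k, ∀ᶠ n in atTop, f n ≡ x [SMOD (I ^ k • ⊤ : Submodule R M)]

namespace AdicTendsto

theorem add (hf : AdicTendsto I f x) (hg : AdicTendsto I g y) :
    AdicTendsto I (fun n ↦ f n + g n) (x + y) := fun k ↦ by
  filter_upwards [hf k, hg k] with n hfn hgn using hfn.add hgn

theorem sub (hf : AdicTendsto I f x) (hg : AdicTendsto I g y) :
    AdicTendsto I (fun n ↦ f n - g n) (x - y) := fun k ↦ by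
  filter_upwards [hf k, hg k] with n hfn hgn using hfn.sub hgn

theorem map (hf : AdicTendsto I f x) (ℓ : M →ₗ[R] N) : AdicTendsto I (fun n ↦ ℓ (f n)) (ℓ x) :=
  fun k ↦ (hf k).mono fun _ h ↦ (h.map ℓ).mono <| by
    rw [Submodule.map_smul'']
    exact smul_mono_right _ le_top

theorem comp (hf : AdicTendsto I f x) {u : ℕ → ℕ} (hu : Tendsto u atTop atTop) :
    AdicTendsto I (f ∘ u) x :=
  fun k ↦ hu.eventually (hf k)

theorem unique [IsHausdorff I M] (hx : AdicTendsto I f x) (hy : AdicTendsto I f y) : x = y :=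
  IsHausdorff.eq_iff_smodEq (I := I) |>.2 fun k ↦
    have ⟨_, hxn, hyn⟩ := ((hx k).and (hy k)).exists
    hxn.symm.trans hyn

theorem mem {k : ℕ} (hf : AdicTendsto I f x) (hmem : ∀ n, f n ∈ (I ^ k • ⊤ : Submodule R M)) :
    x ∈ (I ^ k • ⊤ : Submodule R M) :=
  have ⟨n, hn⟩ := (hf k).exists
  SModEq.zero.1 <| hn.symm.trans <| SModEq.zero.2 <| hmem n

theorem smul_zero {a : ℕ → R} (ha : AdicTendsto I a 0) (f : ℕ → M) :
    AdicTendsto I (fun n ↦ a n • f n) 0 := fun k ↦ by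
  filter_upwards [ha k] with n han
  rw [SModEq.zero, smul_eq_mul, Ideal.mul_top] at han
  exact SModEq.zero.2 (Submodule.smul_mem_smul han trivial)

/-- Dominated convergence: all but finitely many terms `a n j • t j` vanish modulo `I ^ k`, for
every `n` at once. -/
theorem sum_range_smul {t : ℕ → M} {a : ℕ → ℕ → R} {α : ℕ → R} {u : ℕ → ℕ}
    (ht : AdicTendsto I t 0) (ha : ∀ j, AdicTendsto I (a · j) (α j))
    (hu : Tendsto u atTop atTop) (hx : AdicTendsto I (fun n ↦ ∑ j ∈ range n, α j • t j) x) :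
    AdicTendsto I (fun n ↦ ∑ j ∈ range (u n), a n j • t j) x := fun k ↦ by
  obtain ⟨J, hJ⟩ := eventually_atTop.1 (ht k)
  have hsmall : ∀ᶠ n in atTop, ∀ j ∈ range J, a n j ≡ α j [SMOD (I ^ k • ⊤ : Submodule R R)] :=
    (eventually_all_finset _).2 fun j _ ↦ ha j k
  filter_upwards [hsmall, hx.comp hu k] with n hn hxn
  refine (SModEq.sum fun j _ ↦ ?_).trans hxn
  rcases lt_or_ge j J with hj | hj
  · have := hn j (mem_range.2 hj)
    rw [SModEq.sub_mem, smul_eq_mul, Ideal.mul_top] at this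
    rw [SModEq.sub_mem, ← sub_smul]
    exact Submodule.smul_mem_smul this trivial
  · have hvanish (c : R) : c • t j ≡ 0 [SMOD (I ^ k • ⊤ : Submodule R M)] := by
      simpa only [_root_.smul_zero] using (hJ j hj).smul c
    exact (hvanish _).trans (hvanish _).symm

theorem exists_sum_range [IsPrecomplete I M] {t : ℕ → M} (ht : AdicTendsto I t 0) :
    ∃ x, AdicTendsto I (fun n ↦ ∑ j ∈ range n, t j) x := by
  choose J hJ using fun k ↦ eventually_atTop.1 (ht k)
  have htail {k m n : ℕ} (hm : J k ≤ m) (hmn : m ≤ n) :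
      ∑ j ∈ range n, t j ≡ ∑ j ∈ range m, t j [SMOD (I ^ k • ⊤ : Submodule R M)] := by
    rw [SModEq.sub_mem, ← sum_Ico_eq_sub _ hmn]
    exact sum_mem fun j hj ↦ SModEq.zero.1 (hJ k j (hm.trans (mem_Ico.1 hj).1))
  let K (k : ℕ) : ℕ := (range (k + 1)).sup J
  have hJK {k l : ℕ} (hkl : k ≤ l) : J k ≤ K l := le_sup (mem_range.2 (Nat.lt_succ_of_le hkl))
  obtain ⟨x, hx⟩ := IsPrecomplete.prec ‹IsPrecomplete I M› (f := fun k ↦ ∑ j ∈ range (K k), t j)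
    fun hkl ↦ (htail (hJK le_rfl) (sup_mono (range_mono (Nat.succ_le_succ hkl)))).symm
  exact ⟨x, fun k ↦ eventually_atTop.2 ⟨K k, fun n hn ↦ (htail (hJK le_rfl) hn).trans (hx k)⟩⟩

end AdicTendsto

theorem adicTendsto_const (I : Ideal R) (x : M) : AdicTendsto I (fun _ ↦ x) x :=
  fun _ ↦ .of_forall fun _ ↦ .rfl

theorem adicTendsto_pow_zero {r : R} (hr : r ∈ I) : AdicTendsto I (r ^ ·) 0 := fun k ↦ by
  filter_upwards [eventually_ge_atTop k] with n hn
  rw [SModEq.zero, smul_eq_mul, Ideal.mul_top]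
  exact Ideal.pow_le_pow_right hn (Ideal.pow_mem_pow hr n)

end AdicTendsto

section PrincipalIdeal

variable {R M N : Type*} [CommRing R] [AddCommGroup M] [Module R M] [AddCommGroup N] [Module R N]
  {r : R}

theorem mem_span_singleton_pow_smul_top {k : ℕ} {x : M} :
    x ∈ (Ideal.span {r} ^ k • ⊤ : Submodule R M) ↔ ∃ y, x = r ^ k • y := by
  simp only [Ideal.span_singleton_pow, Submodule.ideal_span_singleton_smul,
    Submodule.mem_smul_pointwise_iff_exists, Submodule.mem_top, true_and, eq_comm]

theorem exists_eq_smul_of_forall_apply (hr : IsSMulRegular N r) (f : M →ₗ[R] N)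
    (hf : ∀ x, ∃ y, f x = r • y) : ∃ g : M →ₗ[R] N, f = r • g := by
  let e := LinearEquiv.ofInjective (LinearMap.lsmul R N r) hr
  let f' := f.codRestrict (LinearMap.range (LinearMap.lsmul R N r))
    fun x ↦ (hf x).imp fun y hy ↦ hy.symm
  refine ⟨e.symm ∘ₗ f', LinearMap.ext fun x ↦ ?_⟩
  exact congrArg Subtype.val (e.apply_symm_apply (f' x)).symm

theorem mem_span_singleton_pow_smul_top_hom (hr : IsSMulRegular N r) {k : ℕ} {f : M →ₗ[R] N} :
    f ∈ (Ideal.span {r} ^ k • ⊤ : Submodule R (M →ₗ[R] N)) ↔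
      ∀ x, f x ∈ (Ideal.span {r} ^ k • ⊤ : Submodule R N) := by
  simp only [mem_span_singleton_pow_smul_top]
  refine ⟨?_, exists_eq_smul_of_forall_apply (hr.pow k) f⟩
  rintro ⟨g, rfl⟩ x
  exact ⟨g x, rfl⟩

theorem isAdicComplete_linearMap (hr : IsSMulRegular N r) [IsAdicComplete (Ideal.span {r}) N] :
    IsAdicComplete (Ideal.span {r}) (M →ₗ[R] N) where
  haus' f hf := LinearMap.ext fun x ↦ IsHausdorff.haus (I := Ideal.span {r}) inferInstance _
    fun k ↦ SModEq.zero.2 <|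
      (mem_span_singleton_pow_smul_top_hom hr).1 (SModEq.zero.1 (hf k)) x
  prec' f hf := by
    have hcauchy {k l : ℕ} (hkl : k ≤ l) (x : M) :
        f k x ≡ f l x [SMOD (Ideal.span {r} ^ k • ⊤ : Submodule R N)] :=
      SModEq.sub_mem.2 <|
        (mem_span_singleton_pow_smul_top_hom hr).1 (SModEq.sub_mem.1 (hf hkl)) x
    refine ⟨IsAdicComplete.lift (Ideal.span {r}) (fun k ↦ Submodule.mkQ _ ∘ₗ f k)
      fun hkl ↦ LinearMap.ext fun x ↦ (hcauchy hkl x).symm, fun k ↦ ?_⟩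
    refine SModEq.sub_mem.2 <| (mem_span_singleton_pow_smul_top_hom hr).2 fun x ↦ ?_
    have hlift := IsAdicComplete.mk_lift (Ideal.span {r}) (f := fun k ↦ Submodule.mkQ _ ∘ₗ f k)
      (fun hkl ↦ LinearMap.ext fun x ↦ (hcauchy hkl x).symm) k x
    exact SModEq.sub_mem.1 hlift.symm

end PrincipalIdeal

section Derivation

variable {R D : Type*} [CommRing R] [Ring D] [Algebra R D]

theorem leibniz_of_adicTendsto {I : Ideal R} [IsHausdorff I D] {r : R} (hrI : r ∈ I)
    (hr : IsSMulRegular D r) {Φ : ℕ → D →ₐ[R] D} {q : ℕ → Module.End R D} {δ : Module.End R D}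
    (hΦ : ∀ n, (Φ n).toLinearMap = 1 + r ^ n • q n) (hq : AdicTendsto I q δ) (x y : D) :
    δ (x * y) = δ x * y + x * δ y := by
  have hΦ_apply (n : ℕ) (z : D) : Φ n z = z + r ^ n • q n z := LinearMap.congr_fun (hΦ n) z
  have hq_mul (n : ℕ) :
      q n (x * y) = q n x * y + x * q n y + r ^ n • (q n x * q n y) := by
    apply hr.pow n
    have h := map_mul (Φ n) x y
    simp only [hΦ_apply, add_mul, mul_add, smul_mul_assoc, mul_smul_comm, smul_add] at h
    simp only [smul_add]
    rw [← add_right_inj (x * y), h]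
    abel
  have hq_apply (z : D) : AdicTendsto I (fun n ↦ q n z) (δ z) := hq.map (LinearMap.applyₗ z)
  have hlim : AdicTendsto I (fun n ↦ q n (x * y)) (δ x * y + x * δ y + 0) := by
    simp only [hq_mul]
    exact (((hq_apply x).map (LinearMap.mulRight R y)).add
      ((hq_apply y).map (LinearMap.mulLeft R x))).add ((adicTendsto_pow_zero hrI).smul_zero _)
  rw [(hq_apply (x * y)).unique hlim, add_zero]

end Derivation

section PowDiv

variable (p : ℕ) [Fact p.Prime]

theorem mul_padicInt_valuation_natCast_le (i : ℕ) : p * (i : ℤ_[p]).valuation ≤ i := by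
  rcases eq_or_ne i 0 with rfl | hi
  · simp
  · have hval : (i : ℤ_[p]).valuation = padicValNat p i := by
      rw [← Nat.cast_inj (R := ℤ), ← PadicInt.valuation_coe, PadicInt.coe_natCast,
        Padic.valuation_natCast]
    rw [hval]
    exact (Nat.mul_le_pow (Fact.out : p.Prime).ne_one _).trans
      (Nat.le_of_dvd (Nat.pos_of_ne_zero hi) pow_padicValNat_dvd)

variable {p} in
theorem padicInt_pow_mul_dvd_pow {x : ℤ_[p]} (hx : x ≠ 0) {k n : ℕ} (h : k + x.valuation ≤ n) :
    (p : ℤ_[p]) ^ k * x ∣ p ^ n := by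
  rw [PadicInt.unitCoeff_spec hx, mul_left_comm, ← pow_add, (Units.isUnit _).mul_left_dvd]
  exact pow_dvd_pow _ h

theorem two_mul_padicInt_valuation_natCast_le (i : ℕ) : 2 * (i : ℤ_[p]).valuation ≤ i :=
  (Nat.mul_le_mul_right _ (Fact.out : p.Prime).two_le).trans (mul_padicInt_valuation_natCast_le p i)

theorem natCast_succ_dvd_pow (j : ℕ) : ((j + 1 : ℕ) : ℤ_[p]) ∣ p ^ (j + 1) := by
  have := two_mul_padicInt_valuation_natCast_le p (j + 1)
  have hj : ((j + 1 : ℕ) : ℤ_[p]) ≠ 0 := Nat.cast_ne_zero.2 j.succ_ne_zero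
  simpa only [pow_zero, one_mul] using padicInt_pow_mul_dvd_pow (k := 0) hj (by omega)

/-- The `p`-adic integer `p ^ (j + 1) / (j + 1)`, the coefficient of `θ ^ (j + 1)` in
`log (1 + p θ)` up to sign. -/
noncomputable def powDiv (j : ℕ) : ℤ_[p] := (natCast_succ_dvd_pow p j).choose

theorem natCast_succ_mul_powDiv (j : ℕ) : ((j + 1 : ℕ) : ℤ_[p]) * powDiv p j = p ^ (j + 1) :=
  (natCast_succ_dvd_pow p j).choose_spec.symm

variable {p} in
theorem pow_dvd_powDiv {k j : ℕ} (h : k + ((j + 1 : ℕ) : ℤ_[p]).valuation ≤ j + 1) :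
    (p : ℤ_[p]) ^ k ∣ powDiv p j := by
  have hj : ((j + 1 : ℕ) : ℤ_[p]) ≠ 0 := Nat.cast_ne_zero.2 j.succ_ne_zero
  rw [← mul_dvd_mul_iff_left hj, natCast_succ_mul_powDiv, mul_comm]
  exact padicInt_pow_mul_dvd_pow hj h

theorem prime_dvd_powDiv (j : ℕ) : (p : ℤ_[p]) ∣ powDiv p j := by
  have := two_mul_padicInt_valuation_natCast_le p (j + 1)
  simpa only [pow_one] using pow_dvd_powDiv (k := 1) (by omega)

theorem adicTendsto_powDiv : AdicTendsto (Ideal.span {(p : ℤ_[p])}) (powDiv p) 0 := fun k ↦ by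
  filter_upwards [eventually_ge_atTop (2 * k)] with j hj
  have := two_mul_padicInt_valuation_natCast_le p (j + 1)
  rw [SModEq.zero, smul_eq_mul, Ideal.mul_top, Ideal.span_singleton_pow, Ideal.mem_span_singleton]
  exact pow_dvd_powDiv (by omega)

theorem adicTendsto_prime_pow_choose_succ (j : ℕ) :
    AdicTendsto (Ideal.span {(p : ℤ_[p])}) (fun n ↦ ((p ^ n).choose (j + 1) : ℤ_[p])) 0 := by
  intro k
  filter_upwards [eventually_ge_atTop (k + (j + 1))] with n hn
  rw [SModEq.zero, smul_eq_mul, Ideal.mul_top, Ideal.span_singleton_pow, Ideal.mem_span_singleton]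
  have hj : ((j + 1 : ℕ) : ℤ_[p]) ≠ 0 := Nat.cast_ne_zero.2 j.succ_ne_zero
  have hval := two_mul_padicInt_valuation_natCast_le p (j + 1)
  have habsorb : (p : ℤ_[p]) ^ n * ((p ^ n - 1).choose j : ℕ) =
      ((j + 1 : ℕ) : ℤ_[p]) * ((p ^ n).choose (j + 1) : ℕ) := by
    have h := Nat.add_one_mul_choose_eq (p ^ n - 1) j
    rw [Nat.sub_add_cancel (Nat.pow_pos (Fact.out : p.Prime).pos), mul_comm (Nat.choose _ _)] at h
    exact_mod_cast h
  rw [← mul_dvd_mul_iff_left hj, ← habsorb, mul_comm _ ((p : ℤ_[p]) ^ k)]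
  exact (padicInt_pow_mul_dvd_pow hj (by omega)).mul_right _

theorem adicTendsto_prime_pow_sub_one_choose (j : ℕ) :
    AdicTendsto (Ideal.span {(p : ℤ_[p])}) (fun n ↦ ((p ^ n - 1).choose j : ℤ_[p])) ((-1) ^ j) := by
  induction j with
  | zero => simpa only [Nat.choose_zero_right, Nat.cast_one, pow_zero] using adicTendsto_const _ _
  | succ j ih =>
    have hpascal (n : ℕ) : ((p ^ n - 1).choose (j + 1) : ℤ_[p]) =
        (p ^ n).choose (j + 1) - (p ^ n - 1).choose j := by
      rw [eq_sub_iff_add_eq', ← Nat.cast_add, ← Nat.choose_succ_succ, Nat.succ_eq_add_one,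
        Nat.sub_add_cancel (Nat.pow_pos (Fact.out : p.Prime).pos)]
    simp only [hpascal, pow_succ, mul_neg_one, ← zero_sub ((-1 : ℤ_[p]) ^ j)]
    exact (adicTendsto_prime_pow_choose_succ p j).sub ih

end PowDiv

section Log

variable (p : ℕ) [Fact p.Prime] {A : Type*} [Ring A] [Algebra ℤ_[p] A]

/-- The term `(-1) ^ (i + 1) (p θ) ^ i / i` of the series `log (1 + p θ)`, indexed by
`j = i - 1`. -/
noncomputable def logTerm (θ : A) (j : ℕ) : A := (-1 : ℤ_[p]) ^ j • powDiv p j • θ ^ (j + 1)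

/-- `L` is the `p`-adic logarithm of `1 + p θ`. -/
def IsLogOneAdd (θ L : A) : Prop :=
  AdicTendsto (Ideal.span {(p : ℤ_[p])}) (fun n ↦ ∑ j ∈ range n, logTerm p θ j) L

theorem exists_isLogOneAdd [IsPrecomplete (Ideal.span {(p : ℤ_[p])}) A] (θ : A) :
    ∃ L, IsLogOneAdd p θ L := by
  have hterm : logTerm p θ = fun j ↦ powDiv p j • (-1 : ℤ_[p]) ^ j • θ ^ (j + 1) :=
    funext fun _ ↦ smul_comm _ _ _
  refine AdicTendsto.exists_sum_range ?_
  rw [hterm]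
  exact (adicTendsto_powDiv p).smul_zero _

theorem succ_smul_powDiv_smul_pow (θ : A) (j : ℕ) :
    (j + 1) • powDiv p j • θ ^ (j + 1) = ((p : ℤ_[p]) • θ) ^ (j + 1) := by
  rw [← Nat.cast_smul_eq_nsmul ℤ_[p], smul_smul, natCast_succ_mul_powDiv, smul_pow]

theorem succ_smul_logTerm (θ : A) (j : ℕ) :
    (j + 1) • logTerm p θ j = (-1 : ℤ) ^ (j + 1 + 1) • ((p : ℤ_[p]) • θ) ^ (j + 1) := by
  have hsign : (-1 : ℤ) ^ (j + 1 + 1) = (-1) ^ j := by ring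
  rw [logTerm, smul_comm, succ_smul_powDiv_smul_pow, hsign, ← Int.cast_smul_eq_zsmul ℤ_[p],
    Int.cast_pow, Int.cast_neg, Int.cast_one]

theorem one_add_smul_pow_eq (θ : A) {N : ℕ} (hN : N ≠ 0) :
    (1 + (p : ℤ_[p]) • θ) ^ N = 1 + (N : ℤ_[p]) •
      ∑ j ∈ range N, ((N - 1).choose j : ℤ_[p]) • powDiv p j • θ ^ (j + 1) := by
  obtain ⟨N, rfl⟩ := Nat.exists_eq_succ_of_ne_zero hN
  have hterm (j : ℕ) : ((N + 1).choose (j + 1) : ℤ_[p]) • ((p : ℤ_[p]) • θ) ^ (j + 1) =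
      ((N + 1 : ℕ) : ℤ_[p]) • (N.choose j : ℤ_[p]) • powDiv p j • θ ^ (j + 1) := by
    rw [← succ_smul_powDiv_smul_pow, ← Nat.cast_smul_eq_nsmul ℤ_[p], smul_smul,
      ← Nat.cast_mul, ← Nat.add_one_mul_choose_eq, Nat.cast_mul, mul_smul]
  rw [add_comm, (Commute.one_right _).add_pow, sum_range_succ']
  simp only [one_pow, mul_one, pow_zero, Nat.choose_zero_right, Nat.cast_one, add_comm _ (1 : A),
    smul_sum, ← nsmul_eq_mul', ← Nat.cast_smul_eq_nsmul ℤ_[p], Nat.succ_eq_add_one, hterm,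
    Nat.add_sub_cancel]

variable {p} {θ L : A}

theorem IsLogOneAdd.exists_pow_prime_pow_eq (hL : IsLogOneAdd p θ L) :
    ∃ q : ℕ → A, (∀ n, (1 + (p : ℤ_[p]) • θ) ^ p ^ n = 1 + (p : ℤ_[p]) ^ n • q n) ∧
      AdicTendsto (Ideal.span {(p : ℤ_[p])}) q L := by
  have hp : p.Prime := Fact.out
  refine ⟨_, fun n ↦ ?_, ((adicTendsto_powDiv p).smul_zero _).sum_range_smul
    (adicTendsto_prime_pow_sub_one_choose p) (tendsto_pow_atTop_atTop_of_one_lt hp.one_lt) hL⟩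
  simpa only [Nat.cast_pow] using one_add_smul_pow_eq p θ (pow_ne_zero n hp.ne_zero)

theorem IsLogOneAdd.mem_pow_succ_smul_top {s : ℕ} (hL : IsLogOneAdd p ((p : ℤ_[p]) ^ s • θ) L) :
    L ∈ (Ideal.span {(p : ℤ_[p])} ^ (s + 1) • ⊤ : Submodule ℤ_[p] A) := by
  refine hL.mem fun n ↦ sum_mem fun j _ ↦ Submodule.smul_mem _ _ ?_
  obtain ⟨c, hc⟩ := prime_dvd_powDiv p j
  refine mem_span_singleton_pow_smul_top.2 ⟨c • (θ * ((p : ℤ_[p]) ^ s • θ) ^ j), ?_⟩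
  rw [hc, pow_succ', smul_mul_assoc]
  simp only [smul_smul]
  congr 1
  ring

end Log

section Endomorphism

variable {p : ℕ} [Fact p.Prime] {M : Type*} [AddCommGroup M] [Module ℤ_[p] M]
  {φ θ : Module.End ℤ_[p] M}

theorem iterate_sub_apply (hφ : φ = 1 + (p : ℤ_[p]) • θ) (i : ℕ) (x : M) :
    (fun z ↦ φ z - z)^[i] x = (((p : ℤ_[p]) • θ) ^ i) x := by
  have hsub : (fun z ↦ φ z - z) = ⇑((p : ℤ_[p]) • θ) :=
    funext fun z ↦ sub_eq_of_eq_add' (LinearMap.congr_fun hφ z)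
  rw [hsub, Module.End.pow_apply]

theorem succ_smul_logTerm_apply (hφ : φ = 1 + (p : ℤ_[p]) • θ) (j : ℕ) (x : M) :
    (j + 1) • logTerm p θ j x = (-1 : ℤ) ^ (j + 1 + 1) • (fun z ↦ φ z - z)^[j + 1] x := by
  rw [iterate_sub_apply hφ]
  exact LinearMap.congr_fun (succ_smul_logTerm p θ j) x

variable [Module.IsTorsionFree ℤ_[p] M]

theorem isSMulRegular_prime : IsSMulRegular M (p : ℤ_[p]) :=
  .of_ne_zero (Nat.cast_ne_zero.2 (Fact.out : p.Prime).ne_zero)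

theorem exists_eq_one_add_smul {s : ℕ} (hφ : ∀ x, ∃ y, φ x - x = p ^ (s + 1) • y) :
    ∃ θ : Module.End ℤ_[p] M, φ = 1 + (p : ℤ_[p]) • (p : ℤ_[p]) ^ s • θ := by
  obtain ⟨θ, hθ⟩ := exists_eq_smul_of_forall_apply (isSMulRegular_prime.pow (s + 1)) (φ - 1)
    fun x ↦ (hφ x).imp fun y hy ↦ by
      rwa [← Nat.cast_pow, Nat.cast_smul_eq_nsmul]
  exact ⟨θ, by rw [smul_smul, ← pow_succ', ← hθ, add_sub_cancel]⟩

theorem sum_Icc_eq_sum_logTerm_apply (hφ : φ = 1 + (p : ℤ_[p]) • θ) {x : M} {n : ℕ}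
    {c : ℕ → M} (hc : ∀ i, 1 ≤ i → i ≤ n →
      i • c i = (-1 : ℤ) ^ (i + 1) • (fun z ↦ φ z - z)^[i] x) :
    ∑ i ∈ Icc 1 n, c i = (∑ j ∈ range n, logTerm p θ j) x := by
  have : IsAddTorsionFree M := .of_isTorsionFree ℤ_[p] M
  have hterm (j : ℕ) (hj : j < n) : c (j + 1) = logTerm p θ j x := by
    refine nsmul_right_injective j.succ_ne_zero ?_
    exact (hc (j + 1) j.succ_pos hj).trans (succ_smul_logTerm_apply hφ j x).symm
  calc ∑ i ∈ Icc 1 n, c i = ∑ j ∈ range n, c (j + 1) := by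
        rw [range_eq_Ico, sum_Ico_add' c 0 n 1, zero_add, Ico_add_one_right_eq_Icc]
    _ = ∑ j ∈ range n, logTerm p θ j x := sum_congr rfl fun j hj ↦ hterm j (mem_range.1 hj)
    _ = (∑ j ∈ range n, logTerm p θ j) x := (LinearMap.sum_apply _ _ _).symm

end Endomorphism

theorem IsLogOneAdd.leibniz {p : ℕ} [Fact p.Prime] {D : Type*} [Ring D] [Algebra ℤ_[p] D]
    [Module.IsTorsionFree ℤ_[p] D] [IsHausdorff (Ideal.span {(p : ℤ_[p])}) D]
    {φ : D →ₐ[ℤ_[p]] D} {θ δ : Module.End ℤ_[p] D}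
    (hφ : φ.toLinearMap = 1 + (p : ℤ_[p]) • θ) (hδ : IsLogOneAdd p θ δ) (x y : D) :
    δ (x * y) = δ x * y + x * δ y := by
  obtain ⟨q, hq, hlim⟩ := hδ.exists_pow_prime_pow_eq
  refine leibniz_of_adicTendsto (Φ := fun n ↦ φ ^ p ^ n) (Ideal.mem_span_singleton_self _)
    isSMulRegular_prime (fun n ↦ ?_) hlim x y
  rw [← hq, ← hφ]
  exact map_pow (AlgHom.toEnd : _ →* Module.End ℤ_[p] D) φ _

theorem log_of_automorphism_is_derivation_general (p : ℕ) [Fact p.Prime] {m : ℕ} (hm : m ≠ 0)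
    (D : Type*) [Ring D] [Algebra ℤ_[p] D] [Module.IsTorsionFree ℤ_[p] D]
    [IsAdicComplete (Ideal.span {(p : ℤ_[p])}) D] (φ : D →ₐ[ℤ_[p]] D)
    (hφ : ∀ x, ∃ y, φ x - x = p ^ m • y) :
    ∃ δ : D → D,
      (∀ x y, δ (x + y) = δ x + δ y) ∧
      (∀ x y, δ (x * y) = δ x * y + x * δ y) ∧
      (∀ x, ∃ y, δ x = p ^ m • y) ∧
      (∀ x, ∀ i : ℕ, 1 ≤ i → ∃ c : D, i • c = (-1 : ℤ) ^ (i + 1) • (fun z ↦ φ z - z)^[i] x) ∧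
      (∀ x, ∀ k : ℕ, ∃ N : ℕ, ∀ n : ℕ, N ≤ n → ∀ c : ℕ → D,
        (∀ i : ℕ, 1 ≤ i → i ≤ n → i • c i = (-1 : ℤ) ^ (i + 1) • (fun z ↦ φ z - z)^[i] x) →
        ∃ y : D, δ x - (∑ i ∈ Icc 1 n, c i) = p ^ k • y) := by
  obtain ⟨s, rfl⟩ := Nat.exists_eq_succ_of_ne_zero hm
  obtain ⟨θ, hθ⟩ := exists_eq_one_add_smul (φ := φ.toLinearMap) hφ
  have : IsAdicComplete (Ideal.span {(p : ℤ_[p])}) (Module.End ℤ_[p] D) :=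
    isAdicComplete_linearMap isSMulRegular_prime
  obtain ⟨δ, hδ⟩ := exists_isLogOneAdd p ((p : ℤ_[p]) ^ s • θ)
  obtain ⟨δ', hδ'⟩ := mem_span_singleton_pow_smul_top.1 hδ.mem_pow_succ_smul_top
  refine ⟨δ, map_add δ, hδ.leibniz hθ, fun x ↦ ⟨δ' x, ?_⟩, fun x i hi ↦ ?_, fun x k ↦ ?_⟩
  · rw [hδ', ← Nat.cast_smul_eq_nsmul ℤ_[p], Nat.cast_pow]
    rfl
  · obtain ⟨j, rfl⟩ := Nat.exists_eq_succ_of_ne_zero (Nat.one_le_iff_ne_zero.1 hi)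
    exact ⟨_, succ_smul_logTerm_apply hθ j x⟩
  · have hδx := hδ.map (LinearMap.applyₗ x)
    obtain ⟨N, hN⟩ := eventually_atTop.1 (hδx k)
    refine ⟨N, fun n hn c hc ↦ ?_⟩
    obtain ⟨y, hy⟩ := mem_span_singleton_pow_smul_top.1 (SModEq.sub_mem.1 (hN n hn).symm)
    refine ⟨y, ?_⟩
    rw [sum_Icc_eq_sum_logTerm_apply hθ hc, ← Nat.cast_smul_eq_nsmul ℤ_[p], Nat.cast_pow]
    exact hy

theorem exists_padicBound_eq_pow (p : ℕ) : ∃ m, m ≠ 0 ∧ padicBound p = p ^ m := by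
  unfold padicBound
  split_ifs with hp
  · exact ⟨2, two_ne_zero, by rw [hp]; rfl⟩
  · exact ⟨1, one_ne_zero, (pow_one p).symm⟩

/-- `log φ` is a well-defined derivation. Let `D` be a torsion-free
`ℤ_p`-algebra, complete and Hausdorff for the `p`-adic filtration, and let `φ` be a
`ℤ_p`-algebra automorphism of `D` with `(φ − 1)(D) ⊆ 𝐩D`. Then there is a map
`δ : D → D` which is a derivation, has values in `𝐩D`, and is the `p`-adic limit of the
partial sums of `∑ (−1)^{i+1}(φ−1)^{∘i}/i`. -/
theorem log_of_automorphism_is_derivation (p : ℕ) [Fact p.Prime] (D : Type) [Ring D]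
    [Algebra (PadicInt p) D]
    (hTF : ∀ c : PadicInt p, c ≠ 0 → Function.Injective fun x : D => c • x)
    [IsAdicComplete (Ideal.span {(p : PadicInt p)}) D]
    (φ : D ≃ₐ[PadicInt p] D)
    (hφ : ∀ x : D, ∃ y : D, φ x - x = padicBound p • y) :
    ∃ δ : D → D,
      (∀ x y : D, δ (x + y) = δ x + δ y) ∧
      (∀ x y : D, δ (x * y) = δ x * y + x * δ y) ∧
      (∀ x : D, ∃ y : D, δ x = padicBound p • y) ∧
      (∀ x : D, ∀ i : ℕ, 1 ≤ i →
        ∃ c : D, i • c = (-1 : ℤ) ^ (i + 1) • (fun z : D => φ z - z)^[i] x) ∧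
      (∀ x : D, ∀ k : ℕ, ∃ N : ℕ, ∀ n : ℕ, N ≤ n → ∀ c : ℕ → D,
        (∀ i : ℕ, 1 ≤ i → i ≤ n →
          i • c i = (-1 : ℤ) ^ (i + 1) • (fun z : D => φ z - z)^[i] x) →
        ∃ y : D, δ x - (∑ i ∈ Finset.Icc 1 n, c i) = p ^ k • y) := by
  obtain ⟨m, hm, hpow⟩ := exists_padicBound_eq_pow p
  have : Module.IsTorsionFree ℤ_[p] D := ⟨fun c hc ↦ hTF c hc.ne_zero⟩
  simp only [hpow] at hφ ⊢
  exact log_of_automorphism_is_derivation_general p hm D φ hφ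
end
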